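/- arXiv:1703.00976 — 13 statements merged into one kernel-verified Lean document; each statement's English description precedes it below -/
import Mathlib

section
/- Assume 0 < λ̄_F < s and let q* = F⁻¹(1 − λ̄_F/s). Then the forward-contract expected profit satisfies Π_F(q) ≤ Π_F(q*) for every q ∈ [d_min, d_max], and the optimal expected profit equals Π_F(q*) = λ_f·μ − s·∫_{q*}^{d_max} x·f(x) dx. -/
open MeasureTheory Set

/-! At `qstar` the tail mass `∫ x in qstar..dmax, f x` equals `lF / s`, so the cost terms
`lF * q` and `s * q * ∫ x in qstar..dmax, f x` cancel for every `q`. Hence `PiF q` differs from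
`lf * μ - s * ∫ x in qstar..dmax, x * f x` exactly by `-s * ∫ x in q..qstar, (x - q) * f x`
(the key identity `key` below). This oriented integral vanishes at `q = qstar` and is nonnegative
for either order of `q` and `qstar`, since `f ≥ 0`; both claims follow, with no differentiation. -/

/-- Optimal forward contract (Theorem 1). -/
theorem optimal_forward_contract
    (f F Finv : ℝ → ℝ) (dmin dmax μ s lf lF : ℝ)
    (hdmin : 0 ≤ dmin) (hdd : dmin < dmax)
    (hf_cont : Continuous f)
    (hf_supp : ∀ x, x < dmin ∨ dmax < x → f x = 0)
    (hf_pos : ∀ x ∈ Set.Ioo dmin dmax, 0 < f x)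
    (hf_int : (∫ x in dmin..dmax, f x) = 1)
    (hF : ∀ x, F x = ∫ t in dmin..x, f t)
    (hFinv : ∀ a ∈ Set.Icc (0:ℝ) 1, Finv a ∈ Set.Icc dmin dmax ∧ F (Finv a) = a)
    (hμ : μ = ∫ x in dmin..dmax, x * f x)
    (hs : 0 < s) (hlf : 0 ≤ lf)
    (hlF_pos : 0 < lF) (hlF_lt : lF < s)
    (PiF : ℝ → ℝ)
    (hPiF : ∀ q, PiF q = lf * μ - lF * q - s * ∫ x in q..dmax, (x - q) * f x)
    (qstar : ℝ) (hqstar : qstar = Finv (1 - lF / s)) :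
    (∀ q ∈ Set.Icc dmin dmax, PiF q ≤ PiF qstar) ∧
      PiF qstar = lf * μ - s * ∫ x in qstar..dmax, x * f x := by
  have hnn : ∀ x ∈ Icc dmin dmax, 0 ≤ f x := by
    -- Positivity is only given on the open interval; continuity carries it to the endpoints.
    intro x hx
    rw [← closure_Ioo hdd.ne] at hx
    exact le_on_closure (fun y hy => (hf_pos y hy).le) continuousOn_const
      hf_cont.continuousOn hx
  have ha : 1 - lF / s ∈ Icc (0 : ℝ) 1 := by
    have h1 : lF / s ≤ 1 := (div_le_one hs).2 hlF_lt.le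
    have h2 : 0 ≤ lF / s := by positivity
    constructor <;> linarith
  obtain ⟨hmem, hFq⟩ := hFinv _ ha
  rw [← hqstar] at hmem hFq
  have hi : ∀ a b, IntervalIntegrable f volume a b := fun a b => hf_cont.intervalIntegrable a b
  have hxi : ∀ a b, IntervalIntegrable (fun x => x * f x) volume a b := fun a b =>
    (continuous_id.mul hf_cont).intervalIntegrable a b
  have hqi : ∀ q a b, IntervalIntegrable (fun x => (x - q) * f x) volume a b := fun q a b =>
    ((continuous_id.sub continuous_const).mul hf_cont).intervalIntegrable a b
  have htail : s * ∫ x in qstar..dmax, f x = lF := by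
    have h := intervalIntegral.integral_add_adjacent_intervals (hi dmin qstar) (hi qstar dmax)
    rw [← hF, hFq, hf_int] at h
    have h' : ∫ x in qstar..dmax, f x = lF / s := by linarith
    rw [h']
    field_simp
  have key : ∀ q, PiF q = lf * μ - s * (∫ x in qstar..dmax, x * f x)
      - s * ∫ x in q..qstar, (x - q) * f x := by
    intro q
    have h1 := intervalIntegral.integral_add_adjacent_intervals (hqi q q qstar) (hqi q qstar dmax)
    have h2 : ∫ x in qstar..dmax, (x - q) * f x
        = (∫ x in qstar..dmax, x * f x) - q * ∫ x in qstar..dmax, f x := by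
      simp only [sub_mul]
      rw [intervalIntegral.integral_sub (hxi _ _) ((hi _ _).const_mul q),
        intervalIntegral.integral_const_mul]
    rw [hPiF, ← h1, h2]
    linear_combination q * htail
  have hstar : PiF qstar = lf * μ - s * ∫ x in qstar..dmax, x * f x := by
    rw [key, intervalIntegral.integral_same]
    ring
  refine ⟨fun q hq => ?_, hstar⟩
  have hpos : 0 ≤ ∫ x in q..qstar, (x - q) * f x := by
    rcases le_total q qstar with h | h
    · exact intervalIntegral.integral_nonneg h fun x hx =>
        mul_nonneg (sub_nonneg.2 hx.1) (hnn x ⟨hq.1.trans hx.1, hx.2.trans hmem.2⟩)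
    · -- Reversing the orientation flips the sign, and so does `x ≤ q` in the integrand.
      rw [intervalIntegral.integral_symm, ← intervalIntegral.integral_neg]
      refine intervalIntegral.integral_nonneg h fun x hx => ?_
      rw [← neg_mul]
      exact mul_nonneg (by linarith [hx.2]) (hnn x ⟨hmem.1.trans hx.1, hx.2.trans hq.2⟩)
  rw [hstar, key q]
  linarith [mul_nonneg hs.le hpos]
end

section
/- Assume 0 < λ̄_C < s and 0 < P < s − K, and let q* = F⁻¹(1 − P/(s − K)). Then the call-option expected profit satisfies Π_C(q) ≤ Π_C(q*) for every q ∈ [d_min, d_max], and the optimal expected profit equals Π_C(q*) = (λ_f − K)·μ − (s − K)·∫_{q*}^{d_max} x·f(x) dx. -/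
/-!
Write `c = s - K > 0` and `A q = ∫_q^{dmax} x f(x) dx`. Splitting the integrals at `q` puts the
profit in the form `PiC q = (lf - K) μ - P q - c A q + c q (1 - F q)`. The critical fractile
`qstar` satisfies `c (1 - F qstar) = P`, so the terms in `P` cancel there, which is the closed form.
Substituting the same identity for `P` gives the exact regret
`PiC qstar - PiC q = c ∫_q^{qstar} (x - q) f(x) dx`, which is nonnegative whichever side of `q`
the point `qstar` lies on.
-/

open MeasureTheory Set

/-- The sign of `x - q` matches the orientation of the integral, so no order between `q` and `r`
is needed. -/
lemma integral_sub_mul_nonneg {f : ℝ → ℝ} {a b q r : ℝ} (hf : ∀ x ∈ Icc a b, 0 ≤ f x)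
    (hq : q ∈ Icc a b) (hr : r ∈ Icc a b) : 0 ≤ ∫ x in q..r, (x - q) * f x := by
  rcases le_total q r with h | h
  · exact intervalIntegral.integral_nonneg h fun x hx =>
      mul_nonneg (sub_nonneg.2 hx.1) (hf x ⟨hq.1.trans hx.1, hx.2.trans hr.2⟩)
  · rw [intervalIntegral.integral_symm, ← intervalIntegral.integral_neg]
    refine intervalIntegral.integral_nonneg h fun x hx => ?_
    have := mul_nonneg (sub_nonneg.2 hx.2) (hf x ⟨hr.1.trans hx.1, hx.2.trans hq.2⟩)
    linarith

/-- Optimal call option (Theorem 2). -/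
theorem optimal_call_option
    (f F Finv G : ℝ → ℝ) (dmin dmax μ s lf lC P K : ℝ)
    (hdmin : 0 ≤ dmin) (hdd : dmin < dmax)
    (hf_cont : Continuous f)
    (hf_supp : ∀ x, x < dmin ∨ dmax < x → f x = 0)
    (hf_pos : ∀ x ∈ Set.Ioo dmin dmax, 0 < f x)
    (hf_int : (∫ x in dmin..dmax, f x) = 1)
    (hF : ∀ x, F x = ∫ t in dmin..x, f t)
    (hFinv : ∀ a ∈ Set.Icc (0:ℝ) 1, Finv a ∈ Set.Icc dmin dmax ∧ F (Finv a) = a)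
    (hμ : μ = ∫ x in dmin..dmax, x * f x)
    (hs : 0 < s) (hlf : 0 ≤ lf)
    (hG_range : ∀ y, 0 ≤ y → G y ∈ Set.Icc (0:ℝ) 1)
    (hG_mono : MonotoneOn G (Set.Ici 0))
    (hG_zero : G 0 = 0)
    (hK : K = lC - ∫ y in (0:ℝ)..lC, G y)
    (hlC_pos : 0 < lC) (hlC_lt : lC < s)
    (hP_pos : 0 < P) (hP_lt : P < s - K)
    (PiC : ℝ → ℝ)
    (hPiC : ∀ q, PiC q = lf * μ - P * q - s * (∫ x in q..dmax, (x - q) * f x)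
      - K * ((∫ x in dmin..q, x * f x) + q * (1 - F q)))
    (qstar : ℝ) (hqstar : qstar = Finv (1 - P / (s - K))) :
    (∀ q ∈ Set.Icc dmin dmax, PiC q ≤ PiC qstar) ∧
      PiC qstar = (lf - K) * μ - (s - K) * ∫ x in qstar..dmax, x * f x := by
  have hc : 0 < s - K := hP_pos.trans hP_lt
  have hif : ∀ a b, IntervalIntegrable f volume a b := fun a b => hf_cont.intervalIntegrable a b
  have hixf : ∀ a b, IntervalIntegrable (fun x => x * f x) volume a b :=
    fun a b => (continuous_id.mul hf_cont).intervalIntegrable a b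
  -- positivity is only assumed on the open interval; continuity carries it to the endpoints
  have hf0 : ∀ x ∈ Icc dmin dmax, 0 ≤ f x := by
    intro x hx
    rw [← closure_Ioo hdd.ne] at hx
    exact le_on_closure (fun y hy => (hf_pos y hy).le) continuousOn_const hf_cont.continuousOn hx
  have hsub : ∀ q a b, (∫ x in a..b, (x - q) * f x)
      = (∫ x in a..b, x * f x) - q * ∫ x in a..b, f x := by
    intro q a b
    rw [← intervalIntegral.integral_const_mul,
      ← intervalIntegral.integral_sub (hixf a b) ((hif a b).const_mul q)]
    simp only [sub_mul]
  have hform : ∀ q, PiC q = (lf - K) * μ - P * q - (s - K) * (∫ x in q..dmax, x * f x)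
      + (s - K) * (q * (1 - F q)) := by
    intro q
    have h1 := intervalIntegral.integral_add_adjacent_intervals (hif dmin q) (hif q dmax)
    have h2 := intervalIntegral.integral_add_adjacent_intervals (hixf dmin q) (hixf q dmax)
    rw [hf_int, ← hF] at h1
    rw [← hμ] at h2
    rw [hPiC, hsub, eq_sub_of_add_eq h2, eq_sub_of_add_eq' h1]
    ring
  have ha : 1 - P / (s - K) ∈ Icc (0 : ℝ) 1 :=
    ⟨sub_nonneg.2 ((div_le_one hc).2 hP_lt.le), sub_le_self _ (div_pos hP_pos hc).le⟩
  obtain ⟨hmem, hFq⟩ := hFinv _ ha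
  rw [← hqstar] at hmem hFq
  have hP : P = (s - K) * (1 - F qstar) := by
    rw [hFq]
    field_simp
    ring
  refine ⟨fun q hq => ?_, ?_⟩
  · have hregret : PiC qstar - PiC q = (s - K) * ∫ x in q..qstar, (x - q) * f x := by
      have h1 := intervalIntegral.integral_add_adjacent_intervals (hif dmin q) (hif q qstar)
      have h2 := intervalIntegral.integral_add_adjacent_intervals (hixf q qstar) (hixf qstar dmax)
      rw [← hF, ← hF] at h1
      rw [hform, hform, hsub, ← h2, eq_sub_of_add_eq' h1]
      linear_combination (q - qstar) * hP
    have := mul_nonneg hc.le (integral_sub_mul_nonneg hf0 hq hmem)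
    linarith
  · rw [hform]
    linear_combination (-qstar) * hP
end

section
/- Assume 0 < λ̄_C < s and P > 0. Then 0 ≤ K ≤ λ̄_C < s, the function Π_C is differentiable on (d_min, d_max) with Π_C′(q) = −P + (s − K)·(1 − F(q)) and twice differentiable with Π_C″(q) = −(s − K)·f(q) < 0 for every q ∈ (d_min, d_max); consequently Π_C is strictly concave on [d_min, d_max]. -/
open MeasureTheory Set

/-!
Writing `M q = ∫ x in dmin..q, x * f x`, additivity of the integral and `∫ f = 1` give
`∫ x in q..dmax, (x - q) * f x = μ - M q - q * (1 - F q)`, so the profit collapses to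
`lf * μ - P * q - s * μ + (s - K) * (M q + q * (1 - F q))`.
By the fundamental theorem of calculus the last bracket has derivative `1 - F q`, the two terms
`q * f q` cancelling, and `F` has derivative `f`. Since `0 ≤ G ≤ 1` on `[0, lC]`,
`0 ≤ K ≤ lC < s`, so the second derivative `-(s - K) * f` is negative on the open interval, and
strict concavity on the closed one follows by continuity.
-/

/-- Bounds on K, derivatives and strict concavity of the
call-option expected profit. -/
theorem call_option_profit_concave
    (f F G : ℝ → ℝ) (dmin dmax μ s lf lC P K : ℝ)
    (hdmin : 0 ≤ dmin) (hdd : dmin < dmax)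
    (hf_cont : Continuous f)
    (hf_supp : ∀ x, x < dmin ∨ dmax < x → f x = 0)
    (hf_pos : ∀ x ∈ Set.Ioo dmin dmax, 0 < f x)
    (hf_int : (∫ x in dmin..dmax, f x) = 1)
    (hF : ∀ x, F x = ∫ t in dmin..x, f t)
    (hμ : μ = ∫ x in dmin..dmax, x * f x)
    (hs : 0 < s) (hlf : 0 ≤ lf)
    (hG_range : ∀ y, 0 ≤ y → G y ∈ Set.Icc (0:ℝ) 1)
    (hG_mono : MonotoneOn G (Set.Ici 0))
    (hG_zero : G 0 = 0)
    (hK : K = lC - ∫ y in (0:ℝ)..lC, G y)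
    (hlC_pos : 0 < lC) (hlC_lt : lC < s)
    (hP_pos : 0 < P)
    (PiC : ℝ → ℝ)
    (hPiC : ∀ q, PiC q = lf * μ - P * q - s * (∫ x in q..dmax, (x - q) * f x)
      - K * ((∫ x in dmin..q, x * f x) + q * (1 - F q))) :
    (0 ≤ K ∧ K ≤ lC ∧ lC < s) ∧
    (∀ q ∈ Set.Ioo dmin dmax, HasDerivAt PiC (-P + (s - K) * (1 - F q)) q) ∧
    (∀ q ∈ Set.Ioo dmin dmax,
      HasDerivAt (fun q => -P + (s - K) * (1 - F q)) (-((s - K) * f q)) q ∧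
      -((s - K) * f q) < 0) ∧
    StrictConcaveOn ℝ (Set.Icc dmin dmax) PiC := by
  have hGint : IntervalIntegrable G volume 0 lC := by
    apply MonotoneOn.intervalIntegrable
    apply hG_mono.mono
    rw [uIcc_of_le hlC_pos.le]
    exact Icc_subset_Ici_self
  have hG0 : 0 ≤ ∫ y in (0:ℝ)..lC, G y :=
    intervalIntegral.integral_nonneg hlC_pos.le fun y hy => (hG_range y hy.1).1
  have hG1 : (∫ y in (0:ℝ)..lC, G y) ≤ lC := by
    have h := intervalIntegral.integral_mono_on hlC_pos.le hGint
      (intervalIntegrable_const (c := (1:ℝ))) fun y hy => (hG_range y hy.1).2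
    simpa using h
  have hKs : 0 < s - K := by linarith
  have hxf : Continuous fun x => x * f x := by fun_prop
  have hFd : ∀ q, HasDerivAt F (f q) q := by
    intro q
    rw [show F = fun x => ∫ t in dmin..x, f t from funext hF]
    exact hf_cont.integral_hasStrictDerivAt dmin q |>.hasDerivAt
  have hMd : ∀ q, HasDerivAt (fun q => ∫ x in dmin..q, x * f x) (q * f q) q := fun q =>
    (hxf.integral_hasStrictDerivAt dmin q).hasDerivAt
  have hform : PiC = fun q => lf * μ - P * q - s * μ
      + (s - K) * ((∫ x in dmin..q, x * f x) + q * (1 - F q)) := by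
    funext q
    have h1 : (∫ x in q..dmax, (x - q) * f x)
        = (∫ x in q..dmax, x * f x) - q * ∫ x in q..dmax, f x := by
      rw [← intervalIntegral.integral_const_mul, ← intervalIntegral.integral_sub
        (hxf.intervalIntegrable _ _) ((hf_cont.const_mul q).intervalIntegrable _ _)]
      simp only [sub_mul]
    have h2 := intervalIntegral.integral_add_adjacent_intervals
      (hxf.intervalIntegrable (μ := volume) dmin q) (hxf.intervalIntegrable q dmax)
    have h3 := intervalIntegral.integral_add_adjacent_intervals
      (hf_cont.intervalIntegrable (μ := volume) dmin q) (hf_cont.intervalIntegrable q dmax)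
    rw [← hμ] at h2
    rw [hf_int, ← hF] at h3
    rw [hPiC, h1, eq_sub_of_add_eq' h2, eq_sub_of_add_eq' h3]
    ring
  have hPd : ∀ q, HasDerivAt PiC (-P + (s - K) * (1 - F q)) q := by
    intro q
    rw [hform]
    have h := ((((hasDerivAt_id q).const_mul P).const_sub (lf * μ)).sub_const (s * μ)).add
      (((hMd q).add ((hasDerivAt_id q).mul ((hFd q).const_sub 1))).const_mul (s - K))
    refine h.congr_deriv ?_
    simp only [id]
    ring
  have hPdd : ∀ q, HasDerivAt (fun q => -P + (s - K) * (1 - F q)) (-((s - K) * f q)) q := by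
    intro q
    refine ((((hFd q).const_sub 1).const_mul (s - K)).const_add (-P)).congr_deriv ?_
    ring
  have hneg : ∀ q ∈ Set.Ioo dmin dmax, -((s - K) * f q) < 0 := fun q hq =>
    neg_neg_of_pos (mul_pos hKs (hf_pos q hq))
  refine ⟨⟨by linarith, by linarith, hlC_lt⟩, fun q _ => hPd q,
    fun q hq => ⟨hPdd q, hneg q hq⟩, ?_⟩
  refine strictConcaveOn_of_deriv2_neg (convex_Icc _ _)
    (fun q _ => (hPd q).continuousAt.continuousWithinAt) fun q hq => ?_
  rw [interior_Icc] at hq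
  have hd : deriv PiC = fun q => -P + (s - K) * (1 - F q) := funext fun q => (hPd q).deriv
  simpa only [Function.iterate_succ, Function.iterate_zero, Function.comp_apply, id, hd,
    (hPdd q).deriv] using hneg q hq
end

section
/- Assume s > λ_f and 1/α < s − λ_f, and let r* = F⁻¹(1 − 1/(α·(s − λ_f)))/α. Then the Demand Response expected profit satisfies Π_DR(r) ≤ Π_DR(r*) for every r ≥ 0, and the optimal expected profit equals Π_DR(r*) = (λ_f − s)·∫_{α·r*}^{d_max} x·f(x) dx. -/
open MeasureTheory Set

/-!
Put `c = α * rstar` and `k = s - lf`, so that `∫_c^dmax f = 1 - F c = 1 / (α k)`. For every `y`,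
the residual demand `∫_0^dmax max (x - y) 0 * f x` is at least
`∫_c^dmax (x - y) * f x = ∫_c^dmax x * f x - y / (α k)`, with equality for `y = c`
(`tail_le_residual`, `residual_eq_tail`). With `y = α * r`, multiplying by `-k` turns the term
`y / (α k)` into exactly `+ r`, which cancels the reward paid, so `PiDR r` is at most
`-k * ∫_c^dmax x * f x`, with equality at `r = rstar`.
-/

lemma integral_sub_mul_eq {f : ℝ → ℝ} (hf : Continuous f) (y c d : ℝ) :
    ∫ x in c..d, (x - y) * f x = (∫ x in c..d, x * f x) - y * ∫ x in c..d, f x := by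
  rw [← intervalIntegral.integral_const_mul, ← intervalIntegral.integral_sub]
  · simp only [sub_mul]
  · exact (by fun_prop : Continuous fun x => x * f x).intervalIntegrable _ _
  · exact (by fun_prop : Continuous fun x => y * f x).intervalIntegrable _ _

/-- The residual demand is bounded below by discarding `[0, c]`, where the integrand is nonnegative,
and replacing the positive part by its argument on `[c, d]`. -/
lemma tail_le_residual {f : ℝ → ℝ} (hf : Continuous f) {c d : ℝ}
    (hpos : ∀ x ∈ Ioo 0 d, 0 < f x) (hc : c ∈ Icc 0 d) (y : ℝ) :
    ∫ x in c..d, (x - y) * f x ≤ ∫ x in (0 : ℝ)..d, max (x - y) 0 * f x := by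
  have hcont : Continuous fun x => max (x - y) 0 * f x := by fun_prop
  have hcont' : Continuous fun x => (x - y) * f x := by fun_prop
  rw [← intervalIntegral.integral_add_adjacent_intervals
    (hcont.intervalIntegrable 0 c) (hcont.intervalIntegrable c d)]
  have h1 : ∫ x in (0 : ℝ)..c, (0 : ℝ) ≤ ∫ x in (0 : ℝ)..c, max (x - y) 0 * f x :=
    intervalIntegral.integral_mono_on_of_le_Ioo hc.1 (by simp) (hcont.intervalIntegrable _ _)
      fun x hx => mul_nonneg (le_max_right _ _) (hpos x ⟨hx.1, hx.2.trans_le hc.2⟩).le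
  have h2 : ∫ x in c..d, (x - y) * f x ≤ ∫ x in c..d, max (x - y) 0 * f x :=
    intervalIntegral.integral_mono_on_of_le_Ioo hc.2 (hcont'.intervalIntegrable _ _)
      (hcont.intervalIntegrable _ _)
      fun x hx => mul_le_mul_of_nonneg_right (le_max_left _ _)
        (hpos x ⟨hc.1.trans_lt hx.1, hx.2⟩).le
  simp only [intervalIntegral.integral_zero] at h1
  linarith

lemma residual_eq_tail {f : ℝ → ℝ} (hf : Continuous f) {c d : ℝ} (hc : c ∈ Icc 0 d) :
    ∫ x in (0 : ℝ)..d, max (x - c) 0 * f x = ∫ x in c..d, (x - c) * f x := by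
  have hcont : Continuous fun x => max (x - c) 0 * f x := by fun_prop
  rw [← intervalIntegral.integral_add_adjacent_intervals
    (hcont.intervalIntegrable 0 c) (hcont.intervalIntegrable c d)]
  have h1 : ∫ x in (0 : ℝ)..c, max (x - c) 0 * f x = ∫ x in (0 : ℝ)..c, (0 : ℝ) := by
    refine intervalIntegral.integral_congr fun x hx => ?_
    rw [uIcc_of_le hc.1] at hx
    simp [max_eq_right (sub_nonpos.2 hx.2)]
  have h2 : ∫ x in c..d, max (x - c) 0 * f x = ∫ x in c..d, (x - c) * f x := by
    refine intervalIntegral.integral_congr fun x hx => ?_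
    rw [uIcc_of_le hc.2] at hx
    simp [max_eq_left (sub_nonneg.2 hx.1)]
  simp [h1, h2]

/-- Optimal Demand Response reward (Theorem 3, case 1/α < s − λ_f). -/
theorem optimal_demand_response
    (f F Finv : ℝ → ℝ) (dmax μ s lf α : ℝ)
    (hdmax : 0 < dmax)
    (hf_cont : Continuous f)
    (hf_supp : ∀ x, x < 0 ∨ dmax < x → f x = 0)
    (hf_pos : ∀ x ∈ Set.Ioo 0 dmax, 0 < f x)
    (hf_int : (∫ x in (0:ℝ)..dmax, f x) = 1)
    (hF : ∀ x, F x = ∫ t in (0:ℝ)..x, f t)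
    (hFinv : ∀ a ∈ Set.Icc (0:ℝ) 1, Finv a ∈ Set.Icc 0 dmax ∧ F (Finv a) = a)
    (hμ : μ = ∫ x in (0:ℝ)..dmax, x * f x)
    (hs : 0 < s) (hlf : 0 ≤ lf)
    (hα : 0 < α)
    (hspread : s > lf) (helast : 1 / α < s - lf)
    (PiDR : ℝ → ℝ)
    (hPiDR : ∀ r, PiDR r = (lf - s) * (∫ x in (0:ℝ)..dmax, max (x - α * r) 0 * f x) - r)
    (rstar : ℝ) (hrstar : rstar = Finv (1 - 1 / (α * (s - lf))) / α) :
    (∀ r, 0 ≤ r → PiDR r ≤ PiDR rstar) ∧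
      PiDR rstar = (lf - s) * ∫ x in (α * rstar)..dmax, x * f x := by
  have hk : 0 < s - lf := sub_pos.2 hspread
  have hαk : 1 < α * (s - lf) := by rwa [div_lt_iff₀' hα] at helast
  have ha : 1 - 1 / (α * (s - lf)) ∈ Icc (0 : ℝ) 1 := by
    have h1 : 1 / (α * (s - lf)) ≤ 1 := (div_le_one (by linarith)).2 hαk.le
    have h0 : 0 ≤ 1 / (α * (s - lf)) := by positivity
    constructor <;> linarith
  obtain ⟨hc, hFc⟩ := hFinv _ ha
  have hcr : Finv (1 - 1 / (α * (s - lf))) = α * rstar := by rw [hrstar]; field_simp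
  rw [hcr] at hc hFc
  have htail : ∫ x in (α * rstar)..dmax, f x = 1 / (α * (s - lf)) := by
    have h := intervalIntegral.integral_add_adjacent_intervals (μ := volume)
      (hf_cont.intervalIntegrable 0 (α * rstar)) (hf_cont.intervalIntegrable (α * rstar) dmax)
    rw [hf_int, ← hF, hFc] at h
    linarith
  -- The reward `r` is recovered exactly by the linear term of the tail integral.
  have hcancel : ∀ r, (s - lf) * (α * r * (1 / (α * (s - lf)))) = r := fun r => by field_simp
  have heq : PiDR rstar = (lf - s) * ∫ x in (α * rstar)..dmax, x * f x := by
    rw [hPiDR, residual_eq_tail hf_cont hc, integral_sub_mul_eq hf_cont, htail]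
    linarith [hcancel rstar]
  refine ⟨fun r _ => ?_, heq⟩
  have h := tail_le_residual hf_cont hf_pos hc (α * r)
  rw [integral_sub_mul_eq hf_cont, htail] at h
  rw [heq, hPiDR]
  have h' := mul_le_mul_of_nonneg_left h hk.le
  linarith [hcancel r]
end

section
/- Assume s > λ_f and 1/α ≥ s − λ_f. Then the optimal Demand Response reward is zero: Π_DR(r) ≤ Π_DR(0) = (λ_f − s)·μ for every r ≥ 0. -/
/-!
Since `max (x - α r) 0 ≥ x - α r` and `f` is a density, a reward `r` lowers the expected demand by
at most `α r`. The resulting gain is at most `(s - lf) α r ≤ r`, so it never exceeds the cost `r`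
of the reward.
-/

open MeasureTheory Set

/-- Optimal Demand Response reward is zero when 1/α ≥ s − λ_f
(Theorem 3, second case). -/
theorem optimal_demand_response_zero_reward
    (f F : ℝ → ℝ) (dmax μ s lf α : ℝ)
    (hdmax : 0 < dmax)
    (hf_cont : Continuous f)
    (hf_supp : ∀ x, x < 0 ∨ dmax < x → f x = 0)
    (hf_pos : ∀ x ∈ Set.Ioo 0 dmax, 0 < f x)
    (hf_int : (∫ x in (0:ℝ)..dmax, f x) = 1)
    (hF : ∀ x, F x = ∫ t in (0:ℝ)..x, f t)
    (hμ : μ = ∫ x in (0:ℝ)..dmax, x * f x)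
    (hs : 0 < s) (hlf : 0 ≤ lf)
    (hα : 0 < α)
    (hspread : s > lf) (helast : 1 / α ≥ s - lf)
    (PiDR : ℝ → ℝ)
    (hPiDR : ∀ r, PiDR r = (lf - s) * (∫ x in (0:ℝ)..dmax, max (x - α * r) 0 * f x) - r) :
    (∀ r, 0 ≤ r → PiDR r ≤ PiDR 0) ∧ PiDR 0 = (lf - s) * μ := by
  have h0 : PiDR 0 = (lf - s) * μ := by
    rw [hPiDR, hμ, sub_zero]
    congr 1
    apply intervalIntegral.integral_congr
    intro x hx
    rw [uIcc_of_le hdmax.le] at hx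
    simp [max_eq_left hx.1]
  refine ⟨fun r hr => ?_, h0⟩
  -- The reduction in expected demand is at most `α * r`, since `max (x - α * r) 0 ≥ x - α * r`.
  have hI : μ - α * r ≤ ∫ x in (0:ℝ)..dmax, max (x - α * r) 0 * f x := by
    have h1 : (∫ x in (0:ℝ)..dmax, (x * f x - α * r * f x)) = μ - α * r := by
      rw [intervalIntegral.integral_sub, intervalIntegral.integral_const_mul, hf_int, ← hμ,
        mul_one]
      · exact Continuous.intervalIntegrable (by fun_prop) _ _
      · exact Continuous.intervalIntegrable (by fun_prop) _ _
    rw [← h1]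
    apply intervalIntegral.integral_mono_on_of_le_Ioo hdmax.le
    · exact Continuous.intervalIntegrable (by fun_prop) _ _
    · exact Continuous.intervalIntegrable (by fun_prop) _ _
    · intro x hx
      rw [← sub_mul]
      exact mul_le_mul_of_nonneg_right (le_max_left _ _) (hf_pos x hx).le
  have hα1 : (s - lf) * α ≤ 1 := (le_div_iff₀ hα).1 helast
  rw [h0, hPiDR]
  nlinarith [mul_le_mul_of_nonneg_left hI (sub_pos.2 hspread).le,
    mul_le_mul_of_nonneg_right hα1 hr]
end

section
/- Assume s > λ_f. The function Π_DR is differentiable on (0, d_max/α) with Π_DR′(r) = α·(s − λ_f)·(1 − F(α·r)) − 1 for every r ∈ (0, d_max/α). -/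
open MeasureTheory Set

/-!
For `0 ≤ c ≤ d` the mean residual demand splits at `c`:
`∫₀ᵈ max (x - c) 0 * f x = ∫_cᵈ x * f x - c * ∫_cᵈ f x` (`integral_max_sub_mul`). By the fundamental
theorem of calculus both terms are differentiable in `c`; the boundary contributions `∓ c * f c`
cancel, leaving `-∫_cᵈ f = -(1 - F c)`. The chain rule with `c = α * r` gives the derivative of the
profit.
-/

/-- The right-hand side is written with integrals from `0`, so that the dependence on `c` is
through upper limits of integration and the factor `c`. -/
lemma integral_max_sub_mul {f : ℝ → ℝ} (hf : Continuous f) {c d : ℝ} (hc : 0 ≤ c) (hcd : c ≤ d) :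
    (∫ x in (0:ℝ)..d, max (x - c) 0 * f x) =
      ((∫ x in (0:ℝ)..d, x * f x) - ∫ x in (0:ℝ)..c, x * f x)
        - c * ((∫ x in (0:ℝ)..d, f x) - ∫ x in (0:ℝ)..c, f x) := by
  have hxf : Continuous fun x => x * f x := by fun_prop
  have hm : Continuous fun x => max (x - c) 0 * f x := by fun_prop
  have hleft : (∫ x in (0:ℝ)..c, max (x - c) 0 * f x) = 0 := by
    rw [intervalIntegral.integral_congr (g := fun _ => (0:ℝ)), intervalIntegral.integral_zero]
    intro x hx
    rw [uIcc_of_le hc] at hx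
    simp [max_eq_right (sub_nonpos.2 hx.2)]
  have hright : (∫ x in c..d, max (x - c) 0 * f x) = ∫ x in c..d, (x * f x - c * f x) := by
    apply intervalIntegral.integral_congr
    intro x hx
    rw [uIcc_of_le hcd] at hx
    simp only [max_eq_left (sub_nonneg.2 hx.1), sub_mul]
  rw [← intervalIntegral.integral_add_adjacent_intervals
      (hm.intervalIntegrable 0 c) (hm.intervalIntegrable c d), hleft, hright, zero_add,
    intervalIntegral.integral_sub (hxf.intervalIntegrable c d)
      ((hf.const_mul c).intervalIntegrable c d),
    intervalIntegral.integral_const_mul,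
    intervalIntegral.integral_interval_sub_left (hxf.intervalIntegrable 0 d)
      (hxf.intervalIntegrable 0 c),
    intervalIntegral.integral_interval_sub_left (hf.intervalIntegrable 0 d)
      (hf.intervalIntegrable 0 c)]

lemma hasDerivAt_integral_max_sub_mul {f : ℝ → ℝ} (hf : Continuous f) {c d : ℝ}
    (hc : c ∈ Ioo 0 d) :
    HasDerivAt (fun c => ∫ x in (0:ℝ)..d, max (x - c) 0 * f x)
      (-((∫ x in (0:ℝ)..d, f x) - ∫ x in (0:ℝ)..c, f x)) c := by
  have hxf : Continuous fun x => x * f x := by fun_prop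
  have h1 : HasDerivAt (fun c => ∫ x in (0:ℝ)..c, x * f x) (c * f c) c :=
    hxf.integral_hasStrictDerivAt 0 c |>.hasDerivAt
  have h2 : HasDerivAt (fun c => ∫ x in (0:ℝ)..c, f x) (f c) c :=
    hf.integral_hasStrictDerivAt 0 c |>.hasDerivAt
  have h3 := (h1.const_sub (∫ x in (0:ℝ)..d, x * f x)).fun_sub
    ((hasDerivAt_id' c).fun_mul (h2.const_sub (∫ x in (0:ℝ)..d, f x)))
  refine (h3.congr_of_eventuallyEq ?_).congr_deriv (by ring)
  filter_upwards [isOpen_Ioo.mem_nhds hc] with y hy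
  exact integral_max_sub_mul hf hy.1.le hy.2.le

/-- Derivative of the Demand Response expected profit. -/
theorem demand_response_profit_deriv
    (f F : ℝ → ℝ) (dmax μ s lf α : ℝ)
    (hdmax : 0 < dmax)
    (hf_cont : Continuous f)
    (hf_supp : ∀ x, x < 0 ∨ dmax < x → f x = 0)
    (hf_pos : ∀ x ∈ Set.Ioo 0 dmax, 0 < f x)
    (hf_int : (∫ x in (0:ℝ)..dmax, f x) = 1)
    (hF : ∀ x, F x = ∫ t in (0:ℝ)..x, f t)
    (hμ : μ = ∫ x in (0:ℝ)..dmax, x * f x)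
    (hs : 0 < s) (hlf : 0 ≤ lf)
    (hα : 0 < α)
    (hspread : s > lf)
    (PiDR : ℝ → ℝ)
    (hPiDR : ∀ r, PiDR r = (lf - s) * (∫ x in (0:ℝ)..dmax, max (x - α * r) 0 * f x) - r) :
    ∀ r ∈ Set.Ioo 0 (dmax / α),
      HasDerivAt PiDR (α * (s - lf) * (1 - F (α * r)) - 1) r := by
  intro r hr
  have hc : α * r ∈ Ioo 0 dmax :=
    ⟨mul_pos hα hr.1, by rw [mul_comm]; exact (lt_div_iff₀ hα).1 hr.2⟩
  have hlin : HasDerivAt (fun r => α * r) α r := by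
    simpa using (hasDerivAt_id' r).const_mul α
  have hcomp := (hasDerivAt_integral_max_sub_mul hf_cont hc).comp r hlin
  have h := (hcomp.const_mul (lf - s)).fun_sub (hasDerivAt_id' r)
  rw [funext hPiDR, hF]
  rw [hf_int] at h
  exact h.congr_deriv (by ring)
end

section
/- Let h: [0,∞) → [0,∞) be nondecreasing, concave, and continuous with h(0) = 0, and assume s ≥ λ_f. Then the function r ↦ (λ_f − s)·∫_0^{d_max} max(x − h(r), 0)·f(x) dx − r is concave on [0,∞). -/
/-!
For each fixed `x`, the leftover demand `max (x - h r) 0` is convex in `r`, being the maximum of the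
convex functions `x - h r` and `0`. Integrating against the density, which is positive on
`(0, dmax)`, preserves convexity; multiplying by `lf - s ≤ 0` turns it into concavity, and
subtracting the linear term `r` does not affect it.
-/

open MeasureTheory Set

/-- Concavity of the Demand Response expected profit for a
general nondecreasing concave continuous reduction function h with h(0)=0. -/
theorem demand_response_profit_concave
    (f h : ℝ → ℝ) (dmax μ s lf : ℝ)
    (hdmax : 0 < dmax)
    (hf_cont : Continuous f)
    (hf_supp : ∀ x, x < 0 ∨ dmax < x → f x = 0)
    (hf_pos : ∀ x ∈ Set.Ioo 0 dmax, 0 < f x)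
    (hf_int : (∫ x in (0:ℝ)..dmax, f x) = 1)
    (hμ : μ = ∫ x in (0:ℝ)..dmax, x * f x)
    (hs : 0 < s) (hlf : 0 ≤ lf)
    (hh_nonneg : ∀ r, 0 ≤ r → 0 ≤ h r)
    (hh_mono : MonotoneOn h (Set.Ici 0))
    (hh_concave : ConcaveOn ℝ (Set.Ici 0) h)
    (hh_cont : ContinuousOn h (Set.Ici 0))
    (hh_zero : h 0 = 0)
    (hspread : s ≥ lf) :
    ConcaveOn ℝ (Set.Ici 0)
      (fun r => (lf - s) * (∫ x in (0:ℝ)..dmax, max (x - h r) 0 * f x) - r) := by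
  have hpt : ∀ x, ConvexOn ℝ (Set.Ici 0) (fun r => max (x - h r) 0) := fun x =>
    ((convexOn_const x (convex_Ici 0)).sub hh_concave).sup (convexOn_const 0 (convex_Ici 0))
  have hint : ∀ r, IntervalIntegrable (fun x => max (x - h r) 0 * f x) volume 0 dmax := fun r =>
    (by fun_prop : Continuous fun x => max (x - h r) 0 * f x).intervalIntegrable _ _
  refine ⟨convex_Ici 0, fun p hp q hq a b ha hb hab => ?_⟩
  have key : (∫ x in (0:ℝ)..dmax, max (x - h (a • p + b • q)) 0 * f x) ≤
      a * (∫ x in (0:ℝ)..dmax, max (x - h p) 0 * f x) +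
        b * (∫ x in (0:ℝ)..dmax, max (x - h q) 0 * f x) := by
    rw [← intervalIntegral.integral_const_mul, ← intervalIntegral.integral_const_mul,
      ← intervalIntegral.integral_add ((hint p).const_mul a) ((hint q).const_mul b)]
    refine intervalIntegral.integral_mono_on_of_le_Ioo hdmax.le (hint _)
      (((hint p).const_mul a).add ((hint q).const_mul b)) fun x hx => ?_
    have h1 := mul_le_mul_of_nonneg_right ((hpt x).2 hp hq ha hb hab) (hf_pos x hx).le
    simp only [smul_eq_mul] at h1 ⊢
    linarith
  have h2 := mul_le_mul_of_nonpos_left key (sub_nonpos.2 hspread)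
  simp only [smul_eq_mul] at h2 ⊢
  linarith
end

section
/- Assume the demand is uniformly distributed on [d_min, d_max], 0 < λ̄_F < s, and set a_F = 1 − λ̄_F/s. Then the optimal expected forward-contract profit satisfies λ_f·μ − s·∫_{F⁻¹(a_F)}^{d_max} x·f(x) dx = λ_f·μ − λ̄_F·d_min − √3·s·(1 − a_F²)·σ; in particular it decreases linearly in the standard deviation σ. -/
/-!
On `[F⁻¹(a_F), d_max] ⊆ [d_min, d_max]` the density is the constant `1 / (d_max - d_min)`, so the
tail integral is elementary and equals
`d_min (1 - a_F) + (d_max - d_min) (1 - a_F ^ 2) / 2`. The claim follows from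
`s (1 - a_F) = λ̄_F` and `√3 σ = (d_max - d_min) / 2`.
-/

open MeasureTheory Set

/-- Dispersion form of the optimal forward-contract profit for
uniformly distributed demand. -/
theorem forward_profit_dispersion_uniform
    (f Finv : ℝ → ℝ) (dmin dmax μ σ s lf lF : ℝ)
    (hdmin : 0 ≤ dmin) (hdd : dmin < dmax)
    (hf : ∀ x ∈ Set.Icc dmin dmax, f x = 1 / (dmax - dmin))
    (hFinv : ∀ a, Finv a = dmin + (dmax - dmin) * a)
    (hμ : μ = (dmin + dmax) / 2)
    (hσ : σ = (dmax - dmin) / (2 * Real.sqrt 3))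
    (hs : 0 < s) (hlf : 0 ≤ lf)
    (hlF_pos : 0 < lF) (hlF_lt : lF < s)
    (aF : ℝ) (haF : aF = 1 - lF / s) :
    lf * μ - s * (∫ x in (Finv aF)..dmax, x * f x)
      = lf * μ - lF * dmin - Real.sqrt 3 * s * (1 - aF ^ 2) * σ := by
  have hD : 0 < dmax - dmin := sub_pos.mpr hdd
  have ha0 : 0 ≤ aF := by
    rw [haF, sub_nonneg, div_le_one hs]
    exact hlF_lt.le
  have ha1 : aF ≤ 1 := by
    rw [haF]
    linarith [div_pos hlF_pos hs]
  have hq0 : dmin ≤ Finv aF := by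
    rw [hFinv]
    nlinarith
  have hq1 : Finv aF ≤ dmax := by
    rw [hFinv]
    nlinarith
  -- `f` is pinned only on the support, which contains the interval of integration.
  have hint : ∫ x in (Finv aF)..dmax, x * f x
      = ∫ x in (Finv aF)..dmax, x * (1 / (dmax - dmin)) := by
    refine intervalIntegral.integral_congr fun x hx => ?_
    rw [Set.uIcc_of_le hq1] at hx
    simp only [hf x ⟨hq0.trans hx.1, hx.2⟩]
  have hval : ∫ x in (Finv aF)..dmax, x * f x
      = dmin * (1 - aF) + (dmax - dmin) * (1 - aF ^ 2) / 2 := by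
    rw [hint, intervalIntegral.integral_mul_const, integral_id, hFinv]
    field_simp
    ring
  have hlF : lF = s * (1 - aF) := by
    rw [haF]
    field_simp
    ring
  have hσ' : Real.sqrt 3 * σ = (dmax - dmin) / 2 := by
    rw [hσ]
    field_simp
  rw [hval]
  linear_combination dmin * hlF + s * (1 - aF ^ 2) * hσ'
end

section
/- Assume the demand is uniformly distributed on [d_min, d_max], 0 ≤ K < s and 0 < P < s − K, and set a_C = 1 − P/(s − K). Then the optimal expected call-option profit satisfies (λ_f − K)·μ − (s − K)·∫_{F⁻¹(a_C)}^{d_max} x·f(x) dx = (λ_f − K)·μ − P·d_min − √3·(s − K)·(1 − a_C²)·σ; in particular it decreases linearly in the standard deviation σ. -/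
/-!
For uniform demand the integrand is `x / (dmax - dmin)`, so with `q = dmin + (dmax - dmin) * aC`
the integral over `[q, dmax]` equals `(dmax ^ 2 - q ^ 2) / (2 * (dmax - dmin))`, that is,
`dmin * (1 - aC) + (dmax - dmin) / 2 * (1 - aC ^ 2)`. Multiplying by `s - K` gives the claim, since
`(s - K) * (1 - aC) = P` and `(dmax - dmin) / 2 = √3 * σ`.
-/

open MeasureTheory Set

/-- Dispersion form of the optimal call-option profit for
uniformly distributed demand. -/
theorem call_profit_dispersion_uniform
    (f Finv : ℝ → ℝ) (dmin dmax μ σ s lf P K : ℝ)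
    (hdmin : 0 ≤ dmin) (hdd : dmin < dmax)
    (hf : ∀ x ∈ Set.Icc dmin dmax, f x = 1 / (dmax - dmin))
    (hFinv : ∀ a, Finv a = dmin + (dmax - dmin) * a)
    (hμ : μ = (dmin + dmax) / 2)
    (hσ : σ = (dmax - dmin) / (2 * Real.sqrt 3))
    (hs : 0 < s) (hlf : 0 ≤ lf)
    (hK_nonneg : 0 ≤ K) (hK_lt : K < s)
    (hP_pos : 0 < P) (hP_lt : P < s - K)
    (aC : ℝ) (haC : aC = 1 - P / (s - K)) :
    (lf - K) * μ - (s - K) * (∫ x in (Finv aC)..dmax, x * f x)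
      = (lf - K) * μ - P * dmin - Real.sqrt 3 * (s - K) * (1 - aC ^ 2) * σ := by
  have hD : 0 < dmax - dmin := sub_pos.2 hdd
  have hsK : 0 < s - K := sub_pos.2 hK_lt
  have hP : P = (s - K) * (1 - aC) := by rw [haC]; field_simp; ring
  have ha0 : 0 ≤ aC := by
    rw [haC, sub_nonneg, div_le_one hsK]
    exact hP_lt.le
  have ha1 : aC ≤ 1 := by
    rw [haC]
    exact sub_le_self _ (div_pos hP_pos hsK).le
  have hlo : dmin ≤ Finv aC := by
    rw [hFinv]
    nlinarith [mul_nonneg hD.le ha0]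
  have hhi : Finv aC ≤ dmax := by
    rw [hFinv]
    nlinarith [mul_nonneg hD.le (sub_nonneg.2 ha1)]
  -- `f` is only known on the demand interval, which contains the integration range.
  have hint : (∫ x in (Finv aC)..dmax, x * f x)
      = (dmax ^ 2 - Finv aC ^ 2) / 2 * (1 / (dmax - dmin)) := by
    rw [← integral_id, ← intervalIntegral.integral_mul_const]
    refine intervalIntegral.integral_congr fun x hx => ?_
    rw [Set.uIcc_of_le hhi] at hx
    simp only [hf x ⟨hlo.trans hx.1, hx.2⟩]
  have hσ' : Real.sqrt 3 * σ = (dmax - dmin) / 2 := by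
    have h3 : Real.sqrt 3 ≠ 0 := by positivity
    rw [hσ]
    field_simp
  -- Factor `dmax ^ 2 - q ^ 2` at the quantile `q = Finv aC` to cancel `dmax - dmin`.
  have hval : (dmax ^ 2 - Finv aC ^ 2) / 2 * (1 / (dmax - dmin))
      = dmin * (1 - aC) + (dmax - dmin) / 2 * (1 - aC ^ 2) := by
    rw [hFinv]
    have := hD.ne'
    field_simp
    ring
  rw [hint, hval, ← hσ']
  linear_combination dmin * hP
end

section
/- Assume the demand is uniformly distributed on [d_min, d_max], s > λ_f, α > 0 and 1/α < s − λ_f, and set a_DR = 1 − 1/(α·(s − λ_f)). Then the optimal expected Demand Response profit satisfies (λ_f − s)·∫_{F⁻¹(a_DR)}^{d_max} x·f(x) dx = −d_min/α − √3·(s − λ_f)·(1 − a_DR²)·σ; in particular it decreases linearly in the standard deviation σ. -/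
/-!
With `L = dmax - dmin` and `a = aDR`, elasticity gives `0 ≤ a ≤ 1`, so the quantile `dmin + L * a`
lies in the support and the partial expectation equals `dmin * (1 - a) + L * (1 - a ^ 2) / 2`.
The claim follows from `(s - lf) * (1 - a) = 1 / α` and `√3 * σ = L / 2`.
-/

open MeasureTheory Set

/-- Dispersion form of the optimal Demand Response profit for
uniformly distributed demand. -/
theorem demand_response_profit_dispersion_uniform
    (f Finv : ℝ → ℝ) (dmin dmax μ σ s lf α : ℝ)
    (hdmin : 0 ≤ dmin) (hdd : dmin < dmax)
    (hf : ∀ x ∈ Set.Icc dmin dmax, f x = 1 / (dmax - dmin))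
    (hFinv : ∀ a, Finv a = dmin + (dmax - dmin) * a)
    (hμ : μ = (dmin + dmax) / 2)
    (hσ : σ = (dmax - dmin) / (2 * Real.sqrt 3))
    (hs : 0 < s) (hlf : 0 ≤ lf)
    (hspread : s > lf) (hα : 0 < α) (helast : 1 / α < s - lf)
    (aDR : ℝ) (haDR : aDR = 1 - 1 / (α * (s - lf))) :
    (lf - s) * (∫ x in (Finv aDR)..dmax, x * f x)
      = -dmin / α - Real.sqrt 3 * (s - lf) * (1 - aDR ^ 2) * σ := by
  have hL : 0 < dmax - dmin := sub_pos.mpr hdd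
  have hk : 0 < s - lf := sub_pos.mpr hspread
  have hαk : 1 < α * (s - lf) := by
    rw [div_lt_iff₀ hα] at helast
    linarith
  have ha1 : (s - lf) * (1 - aDR) = 1 / α := by
    rw [haDR]
    field_simp
    ring
  have ha_nonneg : 0 ≤ aDR := by
    rw [haDR, sub_nonneg, div_le_one (by linarith)]
    exact hαk.le
  have ha_le : aDR ≤ 1 := by
    rw [haDR]
    have : 0 < 1 / (α * (s - lf)) := by positivity
    linarith
  have hq_ge : dmin ≤ Finv aDR := by
    rw [hFinv]
    nlinarith
  have hq_le : Finv aDR ≤ dmax := by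
    rw [hFinv]
    nlinarith
  -- The density is prescribed only on the support, which contains the integration range.
  have hint : (∫ x in (Finv aDR)..dmax, x * f x)
      = dmin * (1 - aDR) + (dmax - dmin) * (1 - aDR ^ 2) / 2 := by
    have hcongr : (∫ x in (Finv aDR)..dmax, x * f x)
        = ∫ x in (Finv aDR)..dmax, x * (1 / (dmax - dmin)) := by
      refine intervalIntegral.integral_congr fun x hx => ?_
      rw [uIcc_of_le hq_le] at hx
      simp only [hf x ⟨hq_ge.trans hx.1, hx.2⟩]
    rw [hcongr, intervalIntegral.integral_mul_const, integral_id, hFinv]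
    field_simp
    ring
  have hσ' : Real.sqrt 3 * σ = (dmax - dmin) / 2 := by
    rw [hσ]
    field_simp
  rw [hint]
  linear_combination (-dmin) * ha1 + (s - lf) * (1 - aDR ^ 2) * hσ'
end

section
/- Assume s > λ_f ≥ 0, 0 < λ̄_F < s, 0 < λ̄_C < 2s, and 0 < P < L where L = s − λ̄_C + λ̄_C²/(4s). If λ̄_F ≤ s − (s − λ̄_C + λ̄_C²/(4s) − P)/√(1 − (λ̄_C − λ̄_C²/(4s))/s), then the forward contract is preferred over the call option: max_{q ∈ [0, d_max]} Π_F(q) ≥ max_{q ∈ [0, d_max]} Π_C(q). -/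
/-!
On `[0, dmax]` both profits are concave quadratics with the same constant term
`c = lf * μ - s * dmax / 2`:
`PiF q = c + (s - lF) q - s q² / (2 dmax)` and `PiC q = c + (L - P) q - L q² / (2 dmax)`,
where `L = s - K > 0`. The vertex of `PiF` lies in `[0, dmax]` and has value
`c + dmax (s - lF)² / (2 s)`, while completing the square bounds `PiC` by
`c + dmax (L - P)² / (2 L)`. The price condition says `s - lF ≥ (L - P) / √(L / s)`, whose
square gives `(L - P)² / L ≤ (s - lF)² / s`, exactly the comparison of these two values.
-/

open MeasureTheory Set

/-- Expected demand in excess of `q`, for uniform demand. -/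
lemma integral_excess_demand (f : ℝ → ℝ) (d q : ℝ)
    (hf : ∀ x ∈ Set.Icc (0:ℝ) d, f x = 1 / d) (hq : q ∈ Set.Icc 0 d) :
    ∫ x in q..d, (x - q) * f x = (d - q) ^ 2 / (2 * d) := by
  have h : ∫ x in q..d, (x - q) * f x = ∫ x in q..d, (x - q) * (1 / d) := by
    apply intervalIntegral.integral_congr
    intro x hx
    rw [Set.uIcc_of_le hq.2] at hx
    simp only
    rw [hf x ⟨hq.1.trans hx.1, hx.2⟩]
  rw [h, intervalIntegral.integral_mul_const, intervalIntegral.integral_sub (by simp) (by simp),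
    integral_id, intervalIntegral.integral_const, smul_eq_mul]
  field_simp
  ring

/-- Contribution to expected demand of the outcomes below `q`, for uniform demand. -/
lemma integral_served_demand (f : ℝ → ℝ) (d q : ℝ)
    (hf : ∀ x ∈ Set.Icc (0:ℝ) d, f x = 1 / d) (hq : q ∈ Set.Icc 0 d) :
    ∫ x in (0:ℝ)..q, x * f x = q ^ 2 / (2 * d) := by
  have h : ∫ x in (0:ℝ)..q, x * f x = ∫ x in (0:ℝ)..q, x * (1 / d) := by
    apply intervalIntegral.integral_congr
    intro x hx
    rw [Set.uIcc_of_le hq.1] at hx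
    simp only
    rw [hf x ⟨hx.1, hx.2.trans hq.2⟩]
  rw [h, intervalIntegral.integral_mul_const, integral_id]
  field_simp
  ring

/-- The vertex bound for a concave quadratic, by completing the square. -/
lemma quadratic_le_vertex (a b d q : ℝ) (ha : 0 < a) (hd : 0 < d) :
    b * q - a * q ^ 2 / (2 * d) ≤ d * b ^ 2 / (2 * a) := by
  have h : d * b ^ 2 / (2 * a) - (b * q - a * q ^ 2 / (2 * d))
      = (d * b - a * q) ^ 2 / (2 * a * d) := by
    field_simp
    ring
  have h2 : 0 ≤ (d * b - a * q) ^ 2 / (2 * a * d) := by positivity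
  linarith

/-- Condition under which the forward contract is preferred over
the call option (uniform demand on [0,d_max], uniform spot price on [0,2s]). -/
theorem forward_preferred_over_call
    (f : ℝ → ℝ) (dmax s lf lF lC P K L μ : ℝ)
    (hdmax : 0 < dmax)
    (hf : ∀ x ∈ Set.Icc (0:ℝ) dmax, f x = 1 / dmax)
    (hμ : μ = dmax / 2)
    (hs : 0 < s) (hlf : 0 ≤ lf) (hspread : s > lf)
    (hlF_pos : 0 < lF) (hlF_lt : lF < s)
    (hlC_pos : 0 < lC) (hlC_lt : lC < 2 * s)
    (hK : K = lC - lC ^ 2 / (4 * s))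
    (hL : L = s - lC + lC ^ 2 / (4 * s))
    (hP_pos : 0 < P) (hP_lt : P < L)
    (PiF PiC : ℝ → ℝ)
    (hPiF : ∀ q, PiF q = lf * μ - lF * q - s * ∫ x in q..dmax, (x - q) * f x)
    (hPiC : ∀ q, PiC q = lf * μ - P * q - s * (∫ x in q..dmax, (x - q) * f x)
      - K * ((∫ x in (0:ℝ)..q, x * f x) + q * (1 - q / dmax)))
    (hcond : lF ≤ s - (s - lC + lC ^ 2 / (4 * s) - P)
      / Real.sqrt (1 - (lC - lC ^ 2 / (4 * s)) / s)) :
    sSup (PiF '' Set.Icc 0 dmax) ≥ sSup (PiC '' Set.Icc 0 dmax) := by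
  have hLK : L = s - K := by rw [hL, hK]; ring
  have hL_pos : 0 < L := hP_pos.trans hP_lt
  have hF : ∀ q ∈ Set.Icc 0 dmax, PiF q =
      lf * μ - s * dmax / 2 + ((s - lF) * q - s * q ^ 2 / (2 * dmax)) := by
    intro q hq
    rw [hPiF, integral_excess_demand f dmax q hf hq]
    field_simp
    ring
  have hC : ∀ q ∈ Set.Icc 0 dmax, PiC q =
      lf * μ - s * dmax / 2 + ((L - P) * q - L * q ^ 2 / (2 * dmax)) := by
    intro q hq
    rw [hPiC, integral_excess_demand f dmax q hf hq, integral_served_demand f dmax q hf hq, hLK]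
    field_simp
    ring
  have hcmp : (L - P) ^ 2 / L ≤ (s - lF) ^ 2 / s := by
    have e : 1 - (lC - lC ^ 2 / (4 * s)) / s = L / s := by
      rw [← hK, hLK]
      field_simp
    rw [e, ← hL] at hcond
    have hLs : 0 < L / s := by positivity
    have hle : (L - P) / Real.sqrt (L / s) ≤ s - lF := by linarith
    have h0 : 0 ≤ (L - P) / Real.sqrt (L / s) :=
      div_nonneg (by linarith) (Real.sqrt_nonneg _)
    have hsq := pow_le_pow_left₀ h0 hle 2
    rw [div_pow, Real.sq_sqrt hLs.le] at hsq
    calc (L - P) ^ 2 / L = (L - P) ^ 2 / (L / s) / s := by field_simp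
      _ ≤ (s - lF) ^ 2 / s := by gcongr
  have hval : dmax * (L - P) ^ 2 / (2 * L) ≤ dmax * (s - lF) ^ 2 / (2 * s) := by
    calc dmax * (L - P) ^ 2 / (2 * L) = dmax / 2 * ((L - P) ^ 2 / L) := by field_simp
      _ ≤ dmax / 2 * ((s - lF) ^ 2 / s) := by gcongr
      _ = dmax * (s - lF) ^ 2 / (2 * s) := by field_simp
  -- The optimal forward volume, i.e. the vertex of `PiF`.
  have hvert : dmax * (s - lF) / s ∈ Set.Icc 0 dmax := by
    refine ⟨div_nonneg (mul_nonneg hdmax.le (by linarith)) hs.le, ?_⟩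
    rw [div_le_iff₀ hs]
    nlinarith
  have hFmax : PiF (dmax * (s - lF) / s) =
      lf * μ - s * dmax / 2 + dmax * (s - lF) ^ 2 / (2 * s) := by
    rw [hF _ hvert]
    field_simp
    ring
  have hbdd : BddAbove (PiF '' Set.Icc 0 dmax) := by
    refine ⟨lf * μ - s * dmax / 2 + dmax * (s - lF) ^ 2 / (2 * s), ?_⟩
    rintro _ ⟨q, hq, rfl⟩
    rw [hF q hq]
    linarith [quadratic_le_vertex s (s - lF) dmax q hs hdmax]
  refine (csSup_le ((Set.nonempty_Icc.2 hdmax.le).image _) ?_).trans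
    (le_csSup hbdd ⟨_, hvert, rfl⟩)
  rintro _ ⟨q, hq, rfl⟩
  rw [hC q hq, hFmax]
  linarith [quadratic_le_vertex L (L - P) dmax q hL_pos hdmax]
end

section
/- Assume s > λ_f ≥ 0, 0 < λ̄_F < s, and α > 0. If 1/α ≤ (s − λ_f)·[1 − √(s/(s − λ_f))·(1 − λ̄_F/s)], then Demand Response is preferred over the forward contract: sup_{r ≥ 0} Π_DR(r) ≥ max_{q ∈ [0, d_max]} Π_F(q). -/
/-!
With `k = s - lf` and `c = 1 / α`, both profits are quadratic. The forward profit satisfies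
`PiF q ≤ dmax / 2 * (-k + s * (1 - lF / s) ^ 2)`, by completing the square in `q`
(`forward_profit_le`). The reward `r = dmax * (1 - c / k) / α` gives
`PiDR r = dmax / 2 * (-k + k * (1 - c / k) ^ 2)`. The condition on `α` says
`√(s / k) * (1 - lF / s) ≤ 1 - c / k`, and squaring it compares the two values. Finally `PiDR` is
bounded above by `0`, so its supremum dominates the value at this reward.
-/

open MeasureTheory Set

lemma integral_excess (q d : ℝ) : ∫ x in q..d, (x - q) = (d - q) ^ 2 / 2 := by
  rw [intervalIntegral.integral_sub (by simp) (by simp)]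
  simp only [integral_id, intervalIntegral.integral_const, smul_eq_mul]
  ring

lemma integral_max_excess {a d : ℝ} (ha : 0 ≤ a) (had : a ≤ d) :
    ∫ x in (0:ℝ)..d, max (x - a) 0 = (d - a) ^ 2 / 2 := by
  have hint : ∀ u v : ℝ, IntervalIntegrable (fun x => max (x - a) 0) volume u v := fun u v =>
    Continuous.intervalIntegrable (by fun_prop) u v
  rw [← intervalIntegral.integral_add_adjacent_intervals (hint 0 a) (hint a d)]
  have h1 : ∫ x in (0:ℝ)..a, max (x - a) 0 = ∫ x in (0:ℝ)..a, (0:ℝ) := by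
    apply intervalIntegral.integral_congr
    intro x hx
    rw [uIcc_of_le ha] at hx
    exact max_eq_right (by linarith [hx.2])
  have h2 : ∫ x in a..d, max (x - a) 0 = ∫ x in a..d, (x - a) := by
    apply intervalIntegral.integral_congr
    intro x hx
    rw [uIcc_of_le had] at hx
    exact max_eq_left (by linarith [hx.1])
  rw [h1, h2, integral_excess]
  simp

/-- The right-hand side is the maximum of the left-hand side over `q`, attained at
`q = d * (1 - lF / s)`. -/
lemma forward_profit_le {d s : ℝ} (hd : 0 < d) (hs : 0 < s) (lf lF q : ℝ) :
    lf * (d / 2) - lF * q - s * ((d - q) ^ 2 / 2 * (1 / d)) ≤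
      d / 2 * (-(s - lf) + s * (1 - lF / s) ^ 2) := by
  have h : d / 2 * (-(s - lf) + s * (1 - lF / s) ^ 2) -
      (lf * (d / 2) - lF * q - s * ((d - q) ^ 2 / 2 * (1 / d))) =
      s / (2 * d) * (q - d * (1 - lF / s)) ^ 2 := by
    field_simp
    ring
  have : 0 ≤ s / (2 * d) * (q - d * (1 - lF / s)) ^ 2 := by positivity
  linarith

/-- Condition under which Demand Response is preferred over the
forward contract (uniform demand on [0,d_max], uniform spot price on [0,2s]). -/
theorem dr_preferred_over_forward
    (f : ℝ → ℝ) (dmax s lf lF α μ : ℝ)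
    (hdmax : 0 < dmax)
    (hf : ∀ x ∈ Set.Icc (0:ℝ) dmax, f x = 1 / dmax)
    (hμ : μ = dmax / 2)
    (hs : 0 < s) (hlf : 0 ≤ lf) (hspread : s > lf)
    (hlF_pos : 0 < lF) (hlF_lt : lF < s)
    (hα : 0 < α)
    (PiF PiDR : ℝ → ℝ)
    (hPiF : ∀ q, PiF q = lf * μ - lF * q - s * ∫ x in q..dmax, (x - q) * f x)
    (hPiDR : ∀ r, PiDR r = (lf - s) * (∫ x in (0:ℝ)..dmax, max (x - α * r) 0 * f x) - r)
    (hcond : 1 / α ≤ (s - lf) * (1 - Real.sqrt (s / (s - lf)) * (1 - lF / s))) :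
    sSup (PiDR '' Set.Ici 0) ≥ sSup (PiF '' Set.Icc 0 dmax) := by
  have hk : 0 < s - lf := by linarith
  have hg : 0 < 1 - lF / s := by
    rw [sub_pos, div_lt_one hs]
    exact hlF_lt
  set k := s - lf with hkdef
  set t := 1 / α / k with ht
  have ht0 : 0 < t := by positivity
  have hsqrt : √(s / k) * (1 - lF / s) ≤ 1 - t := by
    have : t ≤ 1 - √(s / k) * (1 - lF / s) := by
      rw [ht, div_le_iff₀ hk]
      linarith
    linarith
  have hlow : 0 ≤ √(s / k) * (1 - lF / s) := by positivity
  have hsq : s * (1 - lF / s) ^ 2 ≤ k * (1 - t) ^ 2 := by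
    have h := pow_le_pow_left₀ hlow hsqrt 2
    rw [mul_pow, Real.sq_sqrt (by positivity)] at h
    calc s * (1 - lF / s) ^ 2 = k * (s / k * (1 - lF / s) ^ 2) := by field_simp
      _ ≤ k * (1 - t) ^ 2 := by gcongr
  have ht1 : 0 ≤ 1 - t := hlow.trans hsqrt
  have hDR : ∀ r, PiDR r =
      -k * ((∫ x in (0:ℝ)..dmax, max (x - α * r) 0) * (1 / dmax)) - r := by
    intro r
    rw [hPiDR, ← intervalIntegral.integral_mul_const, hkdef, neg_sub]
    congr 2
    apply intervalIntegral.integral_congr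
    intro x hx
    rw [uIcc_of_le hdmax.le] at hx
    simp only [hf x hx]
  have hbdd : BddAbove (PiDR '' Ici 0) := by
    refine ⟨0, ?_⟩
    rintro _ ⟨r, hr, rfl⟩
    have hr0 : 0 ≤ r := hr
    have hI : 0 ≤ ∫ x in (0:ℝ)..dmax, max (x - α * r) 0 :=
      intervalIntegral.integral_nonneg hdmax.le fun x _ => le_max_right _ _
    have : 0 ≤ k * ((∫ x in (0:ℝ)..dmax, max (x - α * r) 0) * (1 / dmax)) := by positivity
    rw [hDR]
    linarith
  have hval : PiDR (dmax * (1 - t) / α) = dmax / 2 * (-k + k * (1 - t) ^ 2) := by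
    have hshift : α * (dmax * (1 - t) / α) = dmax * (1 - t) := by field_simp
    have hr : dmax * (1 - t) / α = dmax * (1 - t) * (k * t) := by
      rw [ht]
      field_simp
    rw [hDR, hshift, integral_max_excess (by positivity) (by nlinarith), hr]
    field_simp
    ring
  apply csSup_le ((nonempty_Icc.2 hdmax.le).image _)
  rintro _ ⟨q, hq, rfl⟩
  have hF : PiF q = lf * (dmax / 2) - lF * q - s * ((dmax - q) ^ 2 / 2 * (1 / dmax)) := by
    rw [hPiF, hμ, ← integral_excess, ← intervalIntegral.integral_mul_const]
    congr 2
    apply intervalIntegral.integral_congr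
    intro x hx
    rw [uIcc_of_le hq.2] at hx
    simp only [hf x ⟨hq.1.trans hx.1, hx.2⟩]
  calc PiF q ≤ dmax / 2 * (-k + s * (1 - lF / s) ^ 2) := by
        rw [hF]
        exact forward_profit_le hdmax hs lf lF q
    _ ≤ dmax / 2 * (-k + k * (1 - t) ^ 2) := by gcongr
    _ = PiDR (dmax * (1 - t) / α) := hval.symm
    _ ≤ sSup (PiDR '' Ici 0) := le_csSup hbdd (mem_image_of_mem _ (mem_Ici.2 (by positivity)))
end

section
/- Assume s > λ_f ≥ 0, 0 < λ̄_C < 2s, α > 0, and 0 < P < L where L = s − λ̄_C + λ̄_C²/(4s). If 1/α ≤ (s − λ_f)·[1 − √(L/(s − λ_f))·(1 − P/L)], then Demand Response is preferred over the call option: sup_{r ≥ 0} Π_DR(r) ≥ max_{q ∈ [0, d_max]} Π_C(q). -/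
open MeasureTheory Set

/-!
Write `Δ = s - lf` and `D = dmax`; note `s - K = L`. Evaluating the integrals gives
`PiC q = -Δ D / 2 + (L - P) q - L q² / (2 D)` on `[0, D]`, so `PiC ≤ -Δ D / 2 + (L - P)² D / (2 L)`.
With `t = α r ∈ [0, D]` and `c = 1 / α`, the DR profit is the analogous quadratic
`-Δ D / 2 + (Δ - c) t - Δ t² / (2 D)`, whose value at the vertex `t = D (Δ - c) / Δ` is
`-Δ D / 2 + (Δ - c)² D / (2 Δ)`. The hypothesis on `1 / α` reads
`Δ - c ≥ Δ √(L / Δ) (1 - P / L) ≥ 0`; squaring it gives `(Δ - c)² / Δ ≥ (L - P)² / L`,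
and it also puts the vertex inside `[0, D]`. Since `PiDR ≤ 0`, its supremum dominates this value.
-/

/-- Expected excess of a demand uniform on `[0, D]` over the level `t`. -/
lemma integral_excess_uniform (f : ℝ → ℝ) {D t : ℝ} (hD : 0 < D)
    (hf : ∀ x ∈ Set.Icc (0:ℝ) D, f x = 1 / D) (h0 : 0 ≤ t) (h1 : t ≤ D) :
    ∫ x in t..D, (x - t) * f x = (D - t) ^ 2 / (2 * D) := by
  have h : ∫ x in t..D, (x - t) * f x = ∫ x in t..D, (x - t) * (1 / D) := by
    apply intervalIntegral.integral_congr
    intro x hx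
    rw [uIcc_of_le h1] at hx
    simp only [hf x ⟨h0.trans hx.1, hx.2⟩]
  rw [h, intervalIntegral.integral_mul_const,
    intervalIntegral.integral_sub (by simp) (by simp), integral_id,
    intervalIntegral.integral_const, smul_eq_mul]
  field_simp
  ring

lemma integral_id_uniform (f : ℝ → ℝ) {D q : ℝ}
    (hf : ∀ x ∈ Set.Icc (0:ℝ) D, f x = 1 / D) (h0 : 0 ≤ q) (h1 : q ≤ D) :
    ∫ x in (0:ℝ)..q, x * f x = q ^ 2 / (2 * D) := by
  have h : ∫ x in (0:ℝ)..q, x * f x = ∫ x in (0:ℝ)..q, x * (1 / D) := by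
    apply intervalIntegral.integral_congr
    intro x hx
    rw [uIcc_of_le h0] at hx
    simp only [hf x ⟨hx.1, hx.2.trans h1⟩]
  rw [h, intervalIntegral.integral_mul_const, integral_id]
  ring

lemma integral_max_uniform (f : ℝ → ℝ) {D t : ℝ} (hD : 0 < D)
    (hf : ∀ x ∈ Set.Icc (0:ℝ) D, f x = 1 / D) (h0 : 0 ≤ t) (h1 : t ≤ D) :
    ∫ x in (0:ℝ)..D, max (x - t) 0 * f x = (D - t) ^ 2 / (2 * D) := by
  have h : ∫ x in (0:ℝ)..D, max (x - t) 0 * f x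
      = ∫ x in (0:ℝ)..D, max (x - t) 0 * (1 / D) := by
    apply intervalIntegral.integral_congr
    intro x hx
    rw [uIcc_of_le hD.le] at hx
    simp only [hf x hx]
  have hc : Continuous fun x : ℝ => max (x - t) 0 * (1 / D) := by fun_prop
  have hA : ∫ x in (0:ℝ)..t, max (x - t) 0 * (1 / D) = 0 := by
    refine (intervalIntegral.integral_congr (g := fun _ => (0:ℝ)) ?_).trans (by simp)
    intro x hx
    rw [uIcc_of_le h0] at hx
    simp [max_eq_right (sub_nonpos.2 hx.2)]
  have hB : ∫ x in t..D, max (x - t) 0 * (1 / D) = ∫ x in t..D, (x - t) * f x := by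
    apply intervalIntegral.integral_congr
    intro x hx
    rw [uIcc_of_le h1] at hx
    simp only [max_eq_left (sub_nonneg.2 hx.1), hf x ⟨h0.trans hx.1, hx.2⟩]
  rw [h, ← intervalIntegral.integral_add_adjacent_intervals
    (hc.intervalIntegrable 0 t) (hc.intervalIntegrable t D), hA, hB,
    integral_excess_uniform f hD hf h0 h1, zero_add]

/-- Condition under which Demand Response is preferred over the
call option (uniform demand on [0,d_max], uniform spot price on [0,2s]). -/
theorem dr_preferred_over_call
    (f : ℝ → ℝ) (dmax s lf lC P K L α μ : ℝ)
    (hdmax : 0 < dmax)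
    (hf : ∀ x ∈ Set.Icc (0:ℝ) dmax, f x = 1 / dmax)
    (hμ : μ = dmax / 2)
    (hs : 0 < s) (hlf : 0 ≤ lf) (hspread : s > lf)
    (hlC_pos : 0 < lC) (hlC_lt : lC < 2 * s)
    (hα : 0 < α)
    (hK : K = lC - lC ^ 2 / (4 * s))
    (hL : L = s - lC + lC ^ 2 / (4 * s))
    (hP_pos : 0 < P) (hP_lt : P < L)
    (PiC PiDR : ℝ → ℝ)
    (hPiC : ∀ q, PiC q = lf * μ - P * q - s * (∫ x in q..dmax, (x - q) * f x)
      - K * ((∫ x in (0:ℝ)..q, x * f x) + q * (1 - q / dmax)))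
    (hPiDR : ∀ r, PiDR r = (lf - s) * (∫ x in (0:ℝ)..dmax, max (x - α * r) 0 * f x) - r)
    (hcond : 1 / α ≤ (s - lf) * (1 - Real.sqrt (L / (s - lf)) * (1 - P / L))) :
    sSup (PiDR '' Set.Ici 0) ≥ sSup (PiC '' Set.Icc 0 dmax) := by
  have hΔ : 0 < s - lf := sub_pos.2 hspread
  have hLpos : 0 < L := hP_pos.trans hP_lt
  have hKL : K = s - L := by rw [hK, hL]; ring
  have hc : 0 < 1 / α := by positivity
  set Δ := s - lf with hΔdef
  set c := 1 / α with hcdef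
  have hPL : 0 < 1 - P / L := by
    rw [sub_pos, div_lt_one hLpos]; exact hP_lt
  have hw0 : 0 ≤ Δ * (Real.sqrt (L / Δ) * (1 - P / L)) := by positivity
  have hge : Δ * (Real.sqrt (L / Δ) * (1 - P / L)) ≤ Δ - c := by linarith
  have hΔc : 0 ≤ Δ - c := hw0.trans hge
  have hsq : (L - P) ^ 2 / L ≤ (Δ - c) ^ 2 / Δ := by
    have h2 : (Δ * (Real.sqrt (L / Δ) * (1 - P / L))) ^ 2 = Δ * ((L - P) ^ 2 / L) := by
      rw [mul_pow, mul_pow, Real.sq_sqrt (by positivity)]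
      field_simp
    have h3 := pow_le_pow_left₀ hw0 hge 2
    rw [h2] at h3
    rw [le_div_iff₀ hΔ]
    linarith
  have hbdd : BddAbove (PiDR '' Set.Ici 0) := by
    refine ⟨0, ?_⟩
    rintro _ ⟨r, hr, rfl⟩
    have hr0 : 0 ≤ r := hr
    have hint : 0 ≤ ∫ x in (0:ℝ)..dmax, max (x - α * r) 0 * f x := by
      apply intervalIntegral.integral_nonneg hdmax.le
      intro x hx
      rw [hf x hx]
      positivity
    rw [hPiDR]
    nlinarith [mul_nonneg hΔ.le hint]
  -- `t` is the vertex of the DR profit as a function of the demand shift `α * r`.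
  set t := dmax * (Δ - c) / Δ with ht
  have ht0 : 0 ≤ t := by positivity
  have ht1 : t ≤ dmax := by
    rw [ht, div_le_iff₀ hΔ]
    nlinarith [mul_pos hdmax hc]
  have hDR : PiDR (t / α) = -Δ * dmax / 2 + dmax / 2 * ((Δ - c) ^ 2 / Δ) := by
    rw [hPiDR, mul_div_cancel₀ t hα.ne', integral_max_uniform f hdmax hf ht0 ht1]
    have e1 : lf - s = -Δ := by rw [hΔdef]; ring
    have e2 : t / α = t * c := by rw [hcdef]; ring
    rw [e1, e2, ht]
    field_simp
    ring
  have hle : PiDR (t / α) ≤ sSup (PiDR '' Set.Ici 0) :=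
    le_csSup hbdd ⟨t / α, div_nonneg ht0 hα.le, rfl⟩
  refine le_trans (csSup_le ((nonempty_Icc.2 hdmax.le).image _) ?_) hle
  rintro _ ⟨q, ⟨hq0, hq1⟩, rfl⟩
  -- Completing the square in `q`.
  have hC : PiC q = -Δ * dmax / 2 + dmax / 2 * ((L - P) ^ 2 / L)
      - (L * q - dmax * (L - P)) ^ 2 / (2 * L * dmax) := by
    rw [hPiC, integral_excess_uniform f hdmax hf hq0 hq1,
      integral_id_uniform f hf hq0 hq1, hKL, hμ, hΔdef]
    field_simp
    ring
  have hrem : 0 ≤ (L * q - dmax * (L - P)) ^ 2 / (2 * L * dmax) := by positivity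
  have := mul_le_mul_of_nonneg_left hsq (by positivity : 0 ≤ dmax / 2)
  rw [hC, hDR]
  linarith
end
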